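/- Assume (H₁)–(H₄) and (H₅') hold and L < 1, where L := (2·l_K²/η_G²)(l_G·√(4l_G²+2η_G²) + 2l_G² + η_G²), and let (x,u) ∈ C(I,H₁) × C(I,Ω) be the unique solution of the NFDQVI. Let φ ∈ C(I,ℝ₊) be nondecreasing and suppose z ∈ C(I,H₁), υ ∈ C(I,Ω) and h ∈ C(I,H₁) satisfy: ‖h(s)‖ ≤ φ(s) for all s ∈ I; z(s) = z(0) + (1/Γ(q))·∫₀^s (s−ζ)^{q−1}[f(ζ,z(ζ)) + g(ζ,z(ζ),υ(ζ)) + h(ζ)] dζ for all s ∈ I; υ(s) solves PQVI(s,z(s)) for all s ∈ I; and z(0) = x₀ + ψ(x). Then ‖z(s) − x(s)‖ ≤ (T^q/Γ(q+1))·φ(s)·E_q((l_f + ξ)·s^q) for all s ∈ I, where ξ := l_g(1+√(κ/(1−L))). In particular the NFDQVI is generalized Mittag-Leffler-Hyers-Ulam-Rassias stable with respect to φ·E_q. -/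

import Mathlib

/-!
Since `z 0 = x₀ + ψ x`, the nonlocal terms cancel and `z - x` satisfies a Volterra equation with
the weakly singular kernel `(s - ζ) ^ (q - 1)`. Two facts finish the proof.

* Stability of the quasi-variational inequality (`pqvi_lipschitz`):
  `‖υ s - u s‖ ≤ √(κ/(1-L)) ‖z s - x s‖`. Let `p` be the projection of
  `υ s - ρ G(s, z s, υ s)` onto `K (u s)`. As `υ s` is the projection of the same point onto
  `K (υ s)`, one has `‖υ s - p‖ ≤ l_K ‖υ s - u s‖`; testing the inequality characterizing `p`
  against `u s` and using strong pseudomonotonicity on `K (u s)` bounds `‖p - u s‖` linearly in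
  `‖z s - x s‖` and `‖υ s - p‖`. The resulting linear estimate is stronger than the one with
  constants `κ` and `L` (`le_sqrt_of_linear_bound`).
* A Gronwall inequality for the fractional integral (`fractional_gronwall`), obtained by iteration:
  the Beta integral shows that the fractional integral sends each term of the Mittag-Leffler series
  to the next one, and log-convexity of `Γ` gives convergence of that series.

On `[0, S]` the monotonicity of `φ` allows `φ` to be replaced by the constant `φ S`, so that
Gronwall applies with the constant `T ^ q / Γ(q+1) * φ S`.
-/

open scoped RealInnerProductSpace
open Set

/-- Metric projection onto a set `C` of a real Hilbert space, characterized by the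
variational inequality `⟪w - x, v - w⟫ ≥ 0` for all `v ∈ C`. -/
noncomputable def proj {H : Type*} [NormedAddCommGroup H] [InnerProductSpace ℝ H]
    (C : Set H) (x : H) : H :=
  letI : Nonempty H := ⟨0⟩
  Classical.epsilon fun w => w ∈ C ∧ ∀ v ∈ C, 0 ≤ ⟪w - x, v - w⟫

/-- The constant `L = (2 l_K²/η_G²)(l_G √(4l_G²+2η_G²) + 2l_G² + η_G²)`. -/
noncomputable def Lconst (lK lG ηG : ℝ) : ℝ :=
  2 * lK ^ 2 / ηG ^ 2 * (lG * Real.sqrt (4 * lG ^ 2 + 2 * ηG ^ 2) + 2 * lG ^ 2 + ηG ^ 2)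

/-- The constant `κ = 2 l_G (√(l_G²+η_G²/2)+l_G)² / (η_G² √(l_G²+η_G²/2))`. -/
noncomputable def kconst (lG ηG : ℝ) : ℝ :=
  2 * lG * (Real.sqrt (lG ^ 2 + ηG ^ 2 / 2) + lG) ^ 2 /
    (ηG ^ 2 * Real.sqrt (lG ^ 2 + ηG ^ 2 / 2))

/-- The constant `ξ = l_g (1 + √(κ/(1-L)))`. -/
noncomputable def xiconst (lg lK lG ηG : ℝ) : ℝ :=
  lg * (1 + Real.sqrt (kconst lG ηG / (1 - Lconst lK lG ηG)))

/-- The Mittag-Leffler function `E_q(t) = ∑_{n=0}^∞ tⁿ/Γ(nq+1)`. -/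
noncomputable def mlE (q t : ℝ) : ℝ := ∑' n : ℕ, t ^ n / Real.Gamma (n * q + 1)

/-- `(x, u)` is a solution of the nonlocal fractional differential quasi-variational
inequality (NFDQVI), in the integrated sense of Definition 2.4 of the paper. -/
def IsNFDQVISol {H₁ H₂ : Type*} [NormedAddCommGroup H₁] [InnerProductSpace ℝ H₁]
    [NormedAddCommGroup H₂] [InnerProductSpace ℝ H₂]
    (T q : ℝ) (x₀ : H₁) (ψ : (ℝ → H₁) → H₁) (f : ℝ → H₁ → H₁)
    (g : ℝ → H₁ → H₂ → H₁) (G : ℝ → H₁ → H₂ → H₂) (Ω : Set H₂) (K : H₂ → Set H₂)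
    (x : ℝ → H₁) (u : ℝ → H₂) : Prop :=
  ContinuousOn x (Icc 0 T) ∧ ContinuousOn u (Icc 0 T) ∧
  (∀ s ∈ Icc (0:ℝ) T, u s ∈ Ω) ∧
  (∀ s ∈ Icc (0:ℝ) T,
    x s = x₀ + ψ x + (Real.Gamma q)⁻¹ •
      ∫ ζ in (0:ℝ)..s, ((s - ζ) ^ (q - 1)) • (f ζ (x ζ) + g ζ (x ζ) (u ζ))) ∧
  (∀ s ∈ Icc (0:ℝ) T, u s ∈ K (u s) ∧
    ∀ v ∈ K (u s), 0 ≤ ⟪G s (x s) (u s), v - u s⟫)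

/-! ### Metric projection and the quasi-variational inequality -/

/-- On a nonempty closed convex set `proj` does satisfy the variational inequality
that it is chosen by. -/
lemma proj_spec {H : Type*} [NormedAddCommGroup H] [InnerProductSpace ℝ H] [CompleteSpace H]
    {C : Set H} (hne : C.Nonempty) (hcl : IsClosed C) (hcv : Convex ℝ C) (x : H) :
    proj C x ∈ C ∧ ∀ v ∈ C, 0 ≤ ⟪proj C x - x, v - proj C x⟫ := by
  have hex : ∃ w, w ∈ C ∧ ∀ v ∈ C, 0 ≤ ⟪w - x, v - w⟫ := by
    obtain ⟨w, hw, hmin⟩ := exists_norm_eq_iInf_of_complete_convex hne hcl.isComplete hcv x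
    refine ⟨w, hw, fun v hv => ?_⟩
    have h1 := (norm_eq_iInf_iff_real_inner_le_zero hcv hw).1 hmin v hv
    rw [← neg_sub x w, inner_neg_left]
    linarith
  exact Classical.epsilon_spec hex

lemma eq_proj {H : Type*} [NormedAddCommGroup H] [InnerProductSpace ℝ H] [CompleteSpace H]
    {C : Set H} (hne : C.Nonempty) (hcl : IsClosed C) (hcv : Convex ℝ C) {x w : H}
    (hw : w ∈ C) (hvi : ∀ v ∈ C, 0 ≤ ⟪w - x, v - w⟫) : proj C x = w := by
  obtain ⟨hp, hpv⟩ := proj_spec hne hcl hcv x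
  have h1 := hvi _ hp
  have h2 := hpv _ hw
  set p := proj C x
  have h3 : ⟪w - x, p - w⟫ + ⟪p - x, w - p⟫ = -⟪p - w, p - w⟫ := by
    simp only [inner_sub_left, inner_sub_right]
    ring
  rw [real_inner_self_eq_norm_sq] at h3
  have h4 : ‖p - w‖ = 0 := by nlinarith [sq_nonneg ‖p - w‖]
  exact sub_eq_zero.1 (norm_eq_zero.1 h4)

/-- If `a ≤ (l/η) d + (11/10 + l/η) k a`, then `a ≤ √(κ/(1-L)) d`. The two facts that make the
constants fit are `(11/10 + l/η)² ≤ (3/4) (L/k²)` and `(l/η)² ≤ κ/8`. -/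
lemma le_sqrt_of_linear_bound {l η k a d : ℝ} (hl : 0 < l) (hη : 0 < η)
    (ha : 0 ≤ a) (hd : 0 ≤ d) (hL : Lconst k l η < 1)
    (h : a ≤ l / η * d + (11 / 10 + l / η) * (k * a)) :
    a ≤ Real.sqrt (kconst l η / (1 - Lconst k l η)) * d := by
  set m := Real.sqrt (l ^ 2 + η ^ 2 / 2) with hm
  have hm0 : 0 < m := Real.sqrt_pos.2 (by positivity)
  have hm2 : m ^ 2 = l ^ 2 + η ^ 2 / 2 := Real.sq_sqrt (by positivity)
  have hml : l ≤ m := Real.le_sqrt_of_sq_le (by nlinarith [sq_nonneg η])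
  have hsq : Real.sqrt (4 * l ^ 2 + 2 * η ^ 2) = 2 * m := by
    rw [show 4 * l ^ 2 + 2 * η ^ 2 = (2 * m) ^ 2 by rw [mul_pow, hm2]; ring]
    exact Real.sqrt_sq (by positivity)
  have hLe : Lconst k l η = 4 * m * (m + l) / η ^ 2 * k ^ 2 := by
    rw [Lconst, hsq]
    have : l * (2 * m) + 2 * l ^ 2 + η ^ 2 = 2 * m * (m + l) := by nlinarith
    rw [this]
    ring
  have hκe : kconst l η = 2 * l * (m + l) ^ 2 / (η ^ 2 * m) := by rw [kconst, ← hm]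
  set A := 4 * m * (m + l) / η ^ 2 with hA
  have hα : (11 / 10 + l / η) ^ 2 ≤ 3 / 4 * A := by
    rw [hA, show 11 / 10 + l / η = (11 / 10 * η + l) / η by field_simp, div_pow,
      ← mul_div_assoc]
    gcongr
    nlinarith [sq_nonneg (l - 22 / 100 * η), mul_le_mul_of_nonneg_right hml hl.le, sq_nonneg η]
  have hβ : (l / η) ^ 2 ≤ kconst l η / 8 := by
    rw [hκe, div_pow, div_div, div_le_div_iff₀ (by positivity) (by positivity)]
    have : l * m * 4 ≤ (m + l) ^ 2 := by nlinarith [sq_nonneg (m - l)]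
    have h2 : 0 ≤ 2 * l * η ^ 2 := by positivity
    nlinarith [mul_le_mul_of_nonneg_left this h2]
  have hκ0 : 0 ≤ kconst l η := by rw [hκe]; positivity
  -- Cauchy-Schwarz with weights `3/4` and `1/4`
  have hsum : a ^ 2 ≤ A * k ^ 2 * a ^ 2 + kconst l η * d ^ 2 := by
    have h1 : a ^ 2 ≤ (l / η * d + (11 / 10 + l / η) * (k * a)) ^ 2 := by gcongr
    have h2 : (11 / 10 + l / η) ^ 2 * (k * a) ^ 2 ≤ 3 / 4 * A * (k * a) ^ 2 := by gcongr
    have h3 : (l / η) ^ 2 * d ^ 2 ≤ kconst l η / 8 * d ^ 2 := by gcongr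
    have h4 : 0 ≤ kconst l η * d ^ 2 := by positivity
    nlinarith [sq_nonneg (3 * (l / η * d) - (11 / 10 + l / η) * (k * a))]
  have hpos : 0 < 1 - Lconst k l η := by linarith
  refine le_of_sq_le_sq ?_ (by positivity)
  rw [mul_pow, Real.sq_sqrt (by positivity), div_mul_eq_mul_div, le_div_iff₀ hpos, hLe]
  linarith

/-- Lipschitz dependence of the solutions of the parametric quasi-variational inequality on the
state, at a fixed time: here `F₁ = G s x₁`, `F₂ = G s x₂` and `d = ‖x₂ - x₁‖`. -/
lemma pqvi_lipschitz {H : Type*} [NormedAddCommGroup H] [InnerProductSpace ℝ H] [CompleteSpace H]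
    {Ω : Set H} {K : H → Set H}
    (hK : ∀ u ∈ Ω, (K u).Nonempty ∧ IsClosed (K u) ∧ Convex ℝ (K u) ∧ K u ⊆ Ω)
    {F₁ F₂ : H → H} {l η k d : ℝ} (hl : 0 < l) (hη : 0 < η) (hd : 0 ≤ d)
    (hF : ∀ v₁ ∈ Ω, ∀ v₂ ∈ Ω, ‖F₂ v₂ - F₁ v₁‖ ≤ l * (d + ‖v₂ - v₁‖))
    (hpm : ∀ u ∈ Ω, ∀ v₁ ∈ K u, ∀ v₂ ∈ K u,
      0 ≤ ⟪F₁ v₂, v₁ - v₂⟫ → η * ‖v₁ - v₂‖ ^ 2 ≤ ⟪F₁ v₁, v₁ - v₂⟫)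
    (hKproj : ∀ v₁ ∈ Ω, ∀ v₂ ∈ Ω, ∀ ϖ : H,
      ‖proj (K v₂) ϖ - proj (K v₁) ϖ‖ ≤ k * ‖v₂ - v₁‖)
    (hL : Lconst k l η < 1) {u₁ u₂ : H} (hu₁ : u₁ ∈ Ω) (hu₂ : u₂ ∈ Ω)
    (h₁ : u₁ ∈ K u₁ ∧ ∀ v ∈ K u₁, 0 ≤ ⟪F₁ u₁, v - u₁⟫)
    (h₂ : u₂ ∈ K u₂ ∧ ∀ v ∈ K u₂, 0 ≤ ⟪F₂ u₂, v - u₂⟫) :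
    ‖u₂ - u₁‖ ≤ Real.sqrt (kconst l η / (1 - Lconst k l η)) * d := by
  obtain ⟨hne1, hcl1, hcv1, hsub1⟩ := hK u₁ hu₁
  obtain ⟨hne2, hcl2, hcv2, -⟩ := hK u₂ hu₂
  -- any step size `ρ` with `ρ η` large enough would do
  set ρ : ℝ := 10 / η with hρ
  have hρ0 : 0 < ρ := by positivity
  set ϖ := u₂ - ρ • F₂ u₂ with hϖ
  have hp2 : proj (K u₂) ϖ = u₂ := by
    refine eq_proj hne2 hcl2 hcv2 h₂.1 fun v hv => ?_
    rw [hϖ, sub_sub_cancel, real_inner_smul_left]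
    exact mul_nonneg hρ0.le (h₂.2 v hv)
  obtain ⟨hpK, hpv⟩ := proj_spec hne1 hcl1 hcv1 ϖ
  have hb := hKproj u₁ hu₁ u₂ hu₂ ϖ
  rw [hp2] at hb
  set p := proj (K u₁) ϖ
  have hvi := hpv u₁ h₁.1
  have hmono := hpm u₁ hu₁ p hpK u₁ h₁.1 (h₁.2 p hpK)
  have hFp := hF p (hsub1 hpK) u₂ hu₂
  have e1 : ρ * ⟪F₁ p, p - u₁⟫ + ⟪p - ϖ, u₁ - p⟫
      = ⟪u₂ - p, p - u₁⟫ - ρ * ⟪F₂ u₂ - F₁ p, p - u₁⟫ := by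
    rw [hϖ, show p - (u₂ - ρ • F₂ u₂) = -(u₂ - p) + ρ • F₂ u₂ by abel,
      ← neg_sub p u₁, inner_neg_right, inner_add_left, inner_neg_left, real_inner_smul_left,
      inner_sub_left (F₂ u₂)]
    ring
  have c1 : ⟪u₂ - p, p - u₁⟫ ≤ ‖u₂ - p‖ * ‖p - u₁‖ := real_inner_le_norm _ _
  have c2 : -⟪F₂ u₂ - F₁ p, p - u₁⟫ ≤ l * (d + ‖u₂ - p‖) * ‖p - u₁‖ := by
    have := (abs_le.1 (abs_real_inner_le_norm (F₂ u₂ - F₁ p) (p - u₁))).1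
    have h3 := mul_le_mul_of_nonneg_right hFp (norm_nonneg (p - u₁))
    linarith
  have hc : ‖p - u₁‖ ≤ l / η * d + (l / η + 1 / 10) * ‖u₂ - p‖ := by
    rcases (norm_nonneg (p - u₁)).eq_or_lt with h0 | h0
    · rw [← h0]; positivity
    have h5 : ρ * η * ‖p - u₁‖ * ‖p - u₁‖
        ≤ (ρ * (l * (d + ‖u₂ - p‖)) + ‖u₂ - p‖) * ‖p - u₁‖ := by
      have := mul_le_mul_of_nonneg_left hmono hρ0.le
      have := mul_le_mul_of_nonneg_left c2 hρ0.le
      nlinarith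
    have h6 := le_of_mul_le_mul_right h5 h0
    rw [show ρ * η = 10 by rw [hρ]; field_simp] at h6
    have h7 : ρ * (l * (d + ‖u₂ - p‖)) = 10 * (l / η * d + l / η * ‖u₂ - p‖) := by
      rw [hρ]; ring
    rw [h7] at h6
    linarith
  have htri : ‖u₂ - u₁‖ ≤ ‖u₂ - p‖ + ‖p - u₁‖ := norm_sub_le_norm_sub_add_norm_sub _ _ _
  refine le_sqrt_of_linear_bound hl hη (norm_nonneg _) hd hL ?_
  have h8 := mul_le_mul_of_nonneg_left hb (by positivity : 0 ≤ 11 / 10 + l / η)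
  linarith

/-! ### Convergence of the Mittag-Leffler series -/

/-- By log-convexity of `Γ` on `[x + q, x + q + 1]`, consecutive coefficients of the
Mittag-Leffler series have ratio `O(x ^ (-q))`. -/
lemma Gamma_ratio_le {q x : ℝ} (hq0 : 0 < q) (hq1 : q ≤ 1) (hx : 1 ≤ x) :
    Real.Gamma x / Real.Gamma (x + q) ≤ 2 * x ^ (-q) := by
  have hx0 : 0 < x := by linarith
  have hy0 : 0 < x + q := by linarith
  have hG : 0 < Real.Gamma (x + q) := Real.Gamma_pos_of_pos hy0
  have key : x * Real.Gamma x ≤ Real.Gamma (x + q) * (x + q) ^ (1 - q) := by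
    rw [← Real.Gamma_add_one hx0.ne']
    rcases hq1.eq_or_lt with rfl | hq1
    · simp
    have h1 := Real.Gamma_mul_add_mul_le_rpow_Gamma_mul_rpow_Gamma hy0
      (by linarith : 0 < x + q + 1) hq0 (sub_pos.2 hq1) (by ring)
    rw [show q * (x + q) + (1 - q) * (x + q + 1) = x + 1 by ring, Real.Gamma_add_one hy0.ne',
      Real.mul_rpow hy0.le hG.le] at h1
    have h2 : Real.Gamma (x + q) ^ q * Real.Gamma (x + q) ^ (1 - q) = Real.Gamma (x + q) := by
      rw [← Real.rpow_add hG]; simp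
    calc _ ≤ _ := h1
      _ = (Real.Gamma (x + q) ^ q * Real.Gamma (x + q) ^ (1 - q)) * (x + q) ^ (1 - q) := by ring
      _ = _ := by rw [h2]
  have h3 : (x + q) ^ (1 - q) ≤ 2 * (x * x ^ (-q)) := by
    calc (x + q) ^ (1 - q) ≤ (2 * x) ^ (1 - q) := by
          apply Real.rpow_le_rpow hy0.le (by linarith) (by linarith)
      _ = 2 ^ (1 - q) * x ^ (1 - q) := Real.mul_rpow (by norm_num) hx0.le
      _ ≤ 2 ^ (1 : ℝ) * x ^ (1 - q) := by
          gcongr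
          · norm_num
          · linarith
      _ = _ := by rw [Real.rpow_one, sub_eq_add_neg, Real.rpow_add hx0, Real.rpow_one]
  rw [div_le_iff₀ hG]
  refine le_of_mul_le_mul_left (key.trans ?_) hx0
  calc _ ≤ Real.Gamma (x + q) * (2 * (x * x ^ (-q))) := by gcongr
    _ = _ := by ring

/-- The series defining `mlE q t` converges, so the `tsum` in `mlE` is not a junk value. -/
lemma mlE_summable {q : ℝ} (hq0 : 0 < q) (hq1 : q ≤ 1) (t : ℝ) :
    Summable fun n : ℕ => t ^ n / Real.Gamma (n * q + 1) := by
  have hlim : Filter.Tendsto (fun n : ℕ => |t| * (2 * ((n : ℝ) * q + 1) ^ (-q)))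
      Filter.atTop (nhds 0) := by
    have h1 : Filter.Tendsto (fun n : ℕ => (n : ℝ) * q + 1) Filter.atTop Filter.atTop :=
      Filter.tendsto_atTop_add_const_right _ _
        (tendsto_natCast_atTop_atTop.atTop_mul_const hq0)
    simpa using (((tendsto_rpow_neg_atTop hq0).comp h1).const_mul 2).const_mul |t|
  refine summable_of_ratio_norm_eventually_le (r := 1 / 2) (by norm_num) ?_
  filter_upwards [hlim.eventually_le_const (by norm_num : (0 : ℝ) < 1 / 2)] with n hn
  have hx : (1 : ℝ) ≤ n * q + 1 := by
    have : (0 : ℝ) ≤ n * q := by positivity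
    linarith
  have hΓ : 0 < Real.Gamma (n * q + 1) := Real.Gamma_pos_of_pos (by linarith)
  have hΓ' : 0 < Real.Gamma (n * q + 1 + q) := Real.Gamma_pos_of_pos (by linarith)
  have he : ((n + 1 : ℕ) : ℝ) * q + 1 = n * q + 1 + q := by push_cast; ring
  have hr := Gamma_ratio_le hq0 hq1 hx
  rw [he, norm_div, norm_div, norm_pow, norm_pow, Real.norm_of_nonneg hΓ.le,
    Real.norm_of_nonneg hΓ'.le, Real.norm_eq_abs]
  calc |t| ^ (n + 1) / Real.Gamma (n * q + 1 + q)
      = |t| * (Real.Gamma (n * q + 1) / Real.Gamma (n * q + 1 + q))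
        * (|t| ^ n / Real.Gamma (n * q + 1)) := by field_simp; ring
    _ ≤ |t| * (2 * ((n : ℝ) * q + 1) ^ (-q)) * (|t| ^ n / Real.Gamma (n * q + 1)) := by gcongr
    _ ≤ _ := by gcongr

/-! ### Fractional integrals and the Gronwall inequality -/

lemma intervalIntegrable_kernel {q : ℝ} (hq0 : 0 < q) (s : ℝ) :
    IntervalIntegrable (fun ζ => (s - ζ) ^ (q - 1)) MeasureTheory.volume 0 s := by
  have h := (intervalIntegral.intervalIntegrable_rpow' (a := s) (b := 0)
    (by linarith : -1 < q - 1)).comp_sub_left s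
  simpa using h

/-- The Riemann-Liouville integral of a power, up to the factor `1 / Γ(q)`:
a scaled Beta integral. -/
lemma integral_kernel_mul_pow {q : ℝ} (hq0 : 0 < q) (n : ℕ) {s : ℝ} (hs : 0 ≤ s) :
    ∫ ζ in (0:ℝ)..s, (s - ζ) ^ (q - 1) * (ζ ^ q) ^ n
      = (s ^ q) ^ (n + 1) * (Real.Gamma q * Real.Gamma (n * q + 1)
        / Real.Gamma ((n + 1 : ℕ) * q + 1)) := by
  rcases hs.eq_or_lt with rfl | hs
  · simp [Real.zero_rpow hq0.ne']
  have hnq : 0 < n * q + 1 := by positivity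
  have hc := Complex.betaIntegral_scaled ((n * q + 1 : ℝ) : ℂ) (q : ℂ) hs
  have hL : (∫ ζ in (0:ℝ)..s, (ζ : ℂ) ^ (((n * q + 1 : ℝ) : ℂ) - 1) * ((s : ℂ) - ζ) ^ ((q : ℂ) - 1))
      = ((∫ ζ in (0:ℝ)..s, (s - ζ) ^ (q - 1) * (ζ ^ q) ^ n : ℝ) : ℂ) := by
    rw [← intervalIntegral.integral_ofReal]
    refine intervalIntegral.integral_congr fun ζ hζ => ?_
    rw [uIcc_of_le hs.le] at hζ
    have e1 : (ζ ^ q) ^ n = ζ ^ (n * q + 1 - 1) := by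
      rw [← Real.rpow_mul_natCast hζ.1]; congr 1; ring
    simp only [e1]
    rw [Complex.ofReal_mul, Complex.ofReal_cpow hζ.1, Complex.ofReal_cpow (sub_nonneg.2 hζ.2)]
    push_cast
    ring
  have hR : (s : ℂ) ^ (((n * q + 1 : ℝ) : ℂ) + q - 1) * Complex.betaIntegral ((n * q + 1 : ℝ) : ℂ) q
      = (((s ^ q) ^ (n + 1) * (Real.Gamma q * Real.Gamma (n * q + 1)
        / Real.Gamma ((n + 1 : ℕ) * q + 1)) : ℝ) : ℂ) := by
    rw [Complex.betaIntegral_eq_Gamma_mul_div _ _ (by simpa using hnq) (by simpa using hq0)]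
    have e1 : (s ^ q) ^ (n + 1) = s ^ (n * q + 1 + q - 1) := by
      rw [← Real.rpow_mul_natCast hs.le]; congr 1; push_cast; ring
    rw [e1, show ((n + 1 : ℕ) : ℝ) * q + 1 = n * q + 1 + q by push_cast; ring,
      ← Complex.ofReal_add, Complex.Gamma_ofReal, Complex.Gamma_ofReal, Complex.Gamma_ofReal,
      Complex.ofReal_mul, Complex.ofReal_cpow hs.le]
    push_cast
    ring
  rw [hL, hR] at hc
  exact_mod_cast hc

/-- Fractional Gronwall inequality: iterating the hypothesis `n` times bounds `w` by `c` times the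
`n`-th partial sum of the Mittag-Leffler series, plus a remainder tending to zero. -/
lemma fractional_gronwall {q : ℝ} (hq0 : 0 < q) (hq1 : q ≤ 1) {S c lam : ℝ} (hS : 0 ≤ S)
    (hlam : 0 ≤ lam) {w : ℝ → ℝ} (hw : ContinuousOn w (Icc 0 S))
    (h : ∀ s ∈ Icc (0:ℝ) S,
      w s ≤ c + lam / Real.Gamma q * ∫ ζ in (0:ℝ)..s, (s - ζ) ^ (q - 1) * w ζ) :
    w S ≤ c * mlE q (lam * S ^ q) := by
  have hΓ : 0 < Real.Gamma q := Real.Gamma_pos_of_pos hq0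
  obtain ⟨M, hM⟩ := (isCompact_Icc.image_of_continuousOn hw).bddAbove
  set a : ℕ → ℝ → ℝ := fun n s => (lam * s ^ q) ^ n / Real.Gamma (n * q + 1) with ha
  have hacont : ∀ n, Continuous (a n) := fun n =>
    (((Real.continuous_rpow_const hq0.le).const_mul lam).pow n).div_const _
  have hJ : ∀ n, ∀ s, 0 ≤ s →
      lam / Real.Gamma q * ∫ ζ in (0:ℝ)..s, (s - ζ) ^ (q - 1) * a n ζ = a (n + 1) s := by
    intro n s hs
    have e : ∀ ζ : ℝ, (s - ζ) ^ (q - 1) * a n ζ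
        = lam ^ n / Real.Gamma (n * q + 1) * ((s - ζ) ^ (q - 1) * (ζ ^ q) ^ n) := by
      intro ζ; simp only [ha]; rw [mul_pow]; ring
    have hg : Real.Gamma (n * q + 1) ≠ 0 := (Real.Gamma_pos_of_pos (by positivity)).ne'
    simp only [e]
    rw [intervalIntegral.integral_const_mul, integral_kernel_mul_pow hq0 n hs]
    simp only [ha]
    rw [mul_pow lam (s ^ q) (n + 1)]
    field_simp
    ring
  have hint : ∀ s ∈ Icc (0:ℝ) S, ∀ v : ℝ → ℝ, ContinuousOn v (Icc 0 S) →
      IntervalIntegrable (fun ζ => (s - ζ) ^ (q - 1) * v ζ) MeasureTheory.volume 0 s := by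
    intro s hs v hv
    refine (intervalIntegrable_kernel hq0 s).mul_continuousOn ?_
    rw [uIcc_of_le hs.1]
    exact hv.mono (Icc_subset_Icc_right hs.2)
  have key : ∀ n : ℕ, ∀ s ∈ Icc (0:ℝ) S,
      w s ≤ c * ∑ i ∈ Finset.range n, a i s + M * a n s := by
    intro n
    induction n with
    | zero =>
      intro s hs
      simpa [ha] using hM (mem_image_of_mem w hs)
    | succ n ih =>
      intro s hs
      have hi : ∀ v : ℝ → ℝ, Continuous v →
          IntervalIntegrable (fun ζ => (s - ζ) ^ (q - 1) * v ζ) MeasureTheory.volume 0 s :=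
        fun v hv => hint s hs v hv.continuousOn
      have hsumint : IntervalIntegrable
          (fun ζ => c * ∑ i ∈ Finset.range n, (s - ζ) ^ (q - 1) * a i ζ)
          MeasureTheory.volume 0 s := by
        simp only [← Finset.mul_sum]
        refine (hi (fun ζ => c * ∑ i ∈ Finset.range n, a i ζ)
          ((continuous_finsetSum _ fun i _ => hacont i).const_mul c)).congr
          (fun ζ _ => by ring)
      have h1 : ∫ ζ in (0:ℝ)..s, (s - ζ) ^ (q - 1) * w ζ
          ≤ ∫ ζ in (0:ℝ)..s, (c * ∑ i ∈ Finset.range n, (s - ζ) ^ (q - 1) * a i ζ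
            + M * ((s - ζ) ^ (q - 1) * a n ζ)) := by
        refine intervalIntegral.integral_mono_on hs.1 (hint s hs w hw) ?_ fun ζ hζ => ?_
        · exact hsumint.add ((hi _ (hacont n)).const_mul M)
        · have h2 := mul_le_mul_of_nonneg_left (ih ζ ⟨hζ.1, hζ.2.trans hs.2⟩)
            (Real.rpow_nonneg (sub_nonneg.2 hζ.2) (q - 1))
          rw [← Finset.mul_sum]
          linarith
      rw [intervalIntegral.integral_add hsumint
        ((hi _ (hacont n)).const_mul M), intervalIntegral.integral_const_mul,
        intervalIntegral.integral_const_mul,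
        intervalIntegral.integral_finsetSum fun i _ => hi _ (hacont i)] at h1
      have h3 := mul_le_mul_of_nonneg_left h1 (by positivity : 0 ≤ lam / Real.Gamma q)
      have h4 : lam / Real.Gamma q * ∑ i ∈ Finset.range n,
          ∫ ζ in (0:ℝ)..s, (s - ζ) ^ (q - 1) * a i ζ = ∑ i ∈ Finset.range n, a (i + 1) s := by
        rw [Finset.mul_sum]
        exact Finset.sum_congr rfl fun i _ => hJ i s hs.1
      have h5 : a 0 s = 1 := by simp [ha]
      rw [Finset.sum_range_succ', h5, ← h4, ← hJ n s hs.1]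
      linarith [h s hs]
  have hsum : Summable fun n => a n S := mlE_summable hq0 hq1 (lam * S ^ q)
  have hlim : Filter.Tendsto (fun n => c * ∑ i ∈ Finset.range n, a i S + M * a n S)
      Filter.atTop (nhds (c * mlE q (lam * S ^ q) + M * 0)) :=
    (hsum.hasSum.tendsto_sum_nat.const_mul c).add (hsum.tendsto_atTop_zero.const_mul M)
  rw [mul_zero, add_zero] at hlim
  exact ge_of_tendsto' hlim fun n => key n S ⟨hS, le_rfl⟩

/-! ### Stability -/

/-- Theorem 4.2: generalized Mittag-Leffler-Hyers-Ulam-Rassias stability of the NFDQVI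
with respect to a nondecreasing nonnegative function φ. -/
theorem nfdqvi_gmlhur_stability
    {H₁ H₂ : Type*} [NormedAddCommGroup H₁] [InnerProductSpace ℝ H₁] [CompleteSpace H₁]
    [NormedAddCommGroup H₂] [InnerProductSpace ℝ H₂] [CompleteSpace H₂]
    (T : ℝ) (hT : 0 < T) (q : ℝ) (hq : q ∈ Ioc (0:ℝ) 1) (x₀ : H₁)
    (Ω : Set H₂) (hΩne : Ω.Nonempty) (hΩcl : IsClosed Ω) (hΩcv : Convex ℝ Ω)
    (K : H₂ → Set H₂)
    (hK : ∀ u ∈ Ω, (K u).Nonempty ∧ IsClosed (K u) ∧ Convex ℝ (K u) ∧ K u ⊆ Ω)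
    (G : ℝ → H₁ → H₂ → H₂) (lG ηG : ℝ) (hlG : 0 < lG) (hηG : 0 < ηG)
    -- (H₁)
    (hGLip : ∀ s₁ ∈ Icc (0:ℝ) T, ∀ s₂ ∈ Icc (0:ℝ) T, ∀ (x₁ x₂ : H₁), ∀ u₁ ∈ Ω, ∀ u₂ ∈ Ω,
      ‖G s₂ x₂ u₂ - G s₁ x₁ u₁‖ ≤ lG * (|s₂ - s₁| + ‖x₂ - x₁‖ + ‖u₂ - u₁‖))
    (hGpm : ∀ s ∈ Icc (0:ℝ) T, ∀ (x : H₁), ∀ u ∈ Ω, ∀ u₁ ∈ K u, ∀ u₂ ∈ K u,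
      0 ≤ ⟪G s x u₂, u₁ - u₂⟫ → ηG * ‖u₁ - u₂‖ ^ 2 ≤ ⟪G s x u₁, u₁ - u₂⟫)
    -- (H₂)
    (lK : ℝ) (hlK : 0 ≤ lK)
    (hKproj : ∀ u₁ ∈ Ω, ∀ u₂ ∈ Ω, ∀ ϖ : H₂,
      ‖proj (K u₂) ϖ - proj (K u₁) ϖ‖ ≤ lK * ‖u₂ - u₁‖)
    -- (H₃)
    (g : ℝ → H₁ → H₂ → H₁) (lg : ℝ) (hlg : 0 < lg)
    (hgc : ContinuousOn (fun p : ℝ × H₁ × H₂ => g p.1 p.2.1 p.2.2)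
      (Icc (0:ℝ) T ×ˢ (univ : Set (H₁ × H₂))))
    (hgLip : ∀ s ∈ Icc (0:ℝ) T, ∀ (x₁ x₂ : H₁) (u₁ u₂ : H₂),
      ‖g s x₂ u₂ - g s x₁ u₁‖ ≤ lg * (‖x₂ - x₁‖ + ‖u₂ - u₁‖))
    -- (H₄)
    (f : ℝ → H₁ → H₁) (lf : ℝ) (hlf : 0 < lf)
    (hfc : ContinuousOn (fun p : ℝ × H₁ => f p.1 p.2) (Icc (0:ℝ) T ×ˢ (univ : Set H₁)))
    (hfLip : ∀ s ∈ Icc (0:ℝ) T, ∀ x₁ x₂ : H₁, ‖f s x₂ - f s x₁‖ ≤ lf * ‖x₂ - x₁‖)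
    -- (H₅')
    (ψ : (ℝ → H₁) → H₁) (γ lψ : ℝ) (hγ : 0 < γ) (hlψ0 : 0 < lψ) (hlψ1 : lψ < 1)
    (hψLip : ∀ y₁ y₂ : ℝ → H₁, ContinuousOn y₁ (Icc 0 T) → ContinuousOn y₂ (Icc 0 T) →
      ‖ψ y₂ - ψ y₁‖ ≤ lψ * sSup ((fun s => Real.exp (-(γ * s)) * ‖y₂ s - y₁ s‖) '' Icc 0 T))
    (hsmall : lψ + (lf + xiconst lg lK lG ηG) / Real.Gamma q *
      sSup ((fun s => ∫ ζ in (0:ℝ)..s, (s - ζ) ^ (q - 1) * Real.exp (-(γ * (s - ζ)))) ''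
        Icc (0:ℝ) T) < 1)
    -- L < 1
    (hL : Lconst lK lG ηG < 1)
    -- (x, u) is the (unique) solution of the NFDQVI
    (x : ℝ → H₁) (u : ℝ → H₂) (hxu : IsNFDQVISol T q x₀ ψ f g G Ω K x u)
    -- (z, υ, h): solution of the perturbed inequality system
    (z : ℝ → H₁) (hz : ContinuousOn z (Icc 0 T))
    (υ : ℝ → H₂) (hυc : ContinuousOn υ (Icc 0 T)) (hυΩ : ∀ s ∈ Icc (0:ℝ) T, υ s ∈ Ω)
    (h : ℝ → H₁) (hhc : ContinuousOn h (Icc 0 T))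
    (hzeq : ∀ s ∈ Icc (0:ℝ) T,
      z s = z 0 + (Real.Gamma q)⁻¹ •
        ∫ ζ in (0:ℝ)..s, ((s - ζ) ^ (q - 1)) • (f ζ (z ζ) + g ζ (z ζ) (υ ζ) + h ζ))
    (hυ : ∀ s ∈ Icc (0:ℝ) T, υ s ∈ K (υ s) ∧
      ∀ v ∈ K (υ s), 0 ≤ ⟪G s (z s) (υ s), v - υ s⟫)
    (hz0 : z 0 = x₀ + ψ x)
    (φ : ℝ → ℝ) (hφc : ContinuousOn φ (Icc 0 T)) (hφ0 : ∀ s ∈ Icc (0:ℝ) T, 0 ≤ φ s)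
    (hφmono : MonotoneOn φ (Icc 0 T))
    (hh : ∀ s ∈ Icc (0:ℝ) T, ‖h s‖ ≤ φ s) :
    ∀ s ∈ Icc (0:ℝ) T,
      ‖z s - x s‖ ≤ T ^ q / Real.Gamma (q + 1) * φ s *
        mlE q ((lf + xiconst lg lK lG ηG) * s ^ q) := by
  obtain ⟨hq0, hq1⟩ := hq
  obtain ⟨hxc, huc, huΩ, hxeq, hu⟩ := hxu
  have hΓ : 0 < Real.Gamma q := Real.Gamma_pos_of_pos hq0
  set R := Real.sqrt (kconst lG ηG / (1 - Lconst lK lG ηG)) with hR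
  set lam := lf + xiconst lg lK lG ηG with hlam
  have hlam_eq : lam = lf + lg * (1 + R) := by rw [hlam, xiconst, ← hR]
  have hR0 : 0 ≤ R := Real.sqrt_nonneg _
  have hlam0 : 0 ≤ lam := by rw [hlam_eq]; positivity
  have huυ : ∀ s ∈ Icc (0:ℝ) T, ‖υ s - u s‖ ≤ R * ‖z s - x s‖ := by
    intro s hs
    refine pqvi_lipschitz hK hlG hηG (norm_nonneg _) (F₁ := G s (x s)) (F₂ := G s (z s))
      (fun v₁ hv₁ v₂ hv₂ => ?_) (hGpm s hs (x s)) hKproj hL (huΩ s hs) (hυΩ s hs)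
      (hu s hs) (hυ s hs)
    simpa using hGLip s hs s hs (x s) (z s) v₁ hv₁ v₂ hv₂
  have hF : ∀ y : ℝ → H₁, ContinuousOn y (Icc 0 T) →
      ContinuousOn (fun ζ => f ζ (y ζ)) (Icc 0 T) := fun y hy =>
    hfc.comp (continuousOn_id.prodMk hy) fun ζ hζ => ⟨hζ, mem_univ _⟩
  have hGc : ∀ y : ℝ → H₁, ∀ v : ℝ → H₂, ContinuousOn y (Icc 0 T) → ContinuousOn v (Icc 0 T) →
      ContinuousOn (fun ζ => g ζ (y ζ) (v ζ)) (Icc 0 T) := fun y v hy hv =>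
    hgc.comp (continuousOn_id.prodMk (hy.prodMk hv)) fun ζ hζ => ⟨hζ, mem_univ _⟩
  have hint : ∀ s ∈ Icc (0:ℝ) T, ∀ v : ℝ → H₁, ContinuousOn v (Icc 0 T) →
      IntervalIntegrable (fun ζ => (s - ζ) ^ (q - 1) • v ζ) MeasureTheory.volume 0 s := by
    intro s hs v hv
    refine (intervalIntegrable_kernel hq0 s).smul_continuousOn ?_
    rw [uIcc_of_le hs.1]
    exact hv.mono (Icc_subset_Icc_right hs.2)
  have hwc : ContinuousOn (fun ζ => ‖z ζ - x ζ‖) (Icc 0 T) := (hz.sub hxc).norm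
  intro S hS
  refine fractional_gronwall hq0 hq1 hS.1 hlam0 (w := fun ζ => ‖z ζ - x ζ‖)
    (hwc.mono (Icc_subset_Icc_right hS.2)) fun s hs => ?_
  have hsT : s ∈ Icc (0:ℝ) T := ⟨hs.1, hs.2.trans hS.2⟩
  have hdiff : z s - x s = (Real.Gamma q)⁻¹ • ∫ ζ in (0:ℝ)..s, ((s - ζ) ^ (q - 1)) •
      ((f ζ (z ζ) + g ζ (z ζ) (υ ζ) + h ζ) - (f ζ (x ζ) + g ζ (x ζ) (u ζ))) := by
    have i1 := hint s hsT (fun ζ => f ζ (z ζ) + g ζ (z ζ) (υ ζ) + h ζ)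
      (((hF z hz).add (hGc z υ hz hυc)).add hhc)
    have i2 := hint s hsT (fun ζ => f ζ (x ζ) + g ζ (x ζ) (u ζ)) ((hF x hxc).add (hGc x u hxc huc))
    simp only [smul_sub]
    rw [intervalIntegral.integral_sub i1 i2, hzeq s hsT, hxeq s hsT, hz0, smul_sub]
    abel
  have hkw : IntervalIntegrable (fun ζ => (s - ζ) ^ (q - 1) * ‖z ζ - x ζ‖)
      MeasureTheory.volume 0 s := by
    refine (intervalIntegrable_kernel hq0 s).mul_continuousOn ?_
    rw [uIcc_of_le hs.1]
    exact hwc.mono (Icc_subset_Icc_right hsT.2)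
  have hk1 := integral_kernel_mul_pow hq0 0 hs.1
  simp only [pow_zero, mul_one, Nat.cast_zero, zero_mul, zero_add, Real.Gamma_one, pow_one,
    Nat.cast_one, one_mul] at hk1
  have hbound : ‖∫ ζ in (0:ℝ)..s, ((s - ζ) ^ (q - 1)) •
      ((f ζ (z ζ) + g ζ (z ζ) (υ ζ) + h ζ) - (f ζ (x ζ) + g ζ (x ζ) (u ζ)))‖
      ≤ ∫ ζ in (0:ℝ)..s, (lam * ((s - ζ) ^ (q - 1) * ‖z ζ - x ζ‖)
        + φ S * (s - ζ) ^ (q - 1)) := by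
    refine intervalIntegral.norm_integral_le_of_norm_le hs.1
      (Filter.Eventually.of_forall fun ζ hζ => ?_)
      ((hkw.const_mul lam).add ((intervalIntegrable_kernel hq0 s).const_mul (φ S)))
    have hζT : ζ ∈ Icc (0:ℝ) T := ⟨hζ.1.le, hζ.2.trans hsT.2⟩
    have hk0 : 0 ≤ (s - ζ) ^ (q - 1) := Real.rpow_nonneg (sub_nonneg.2 hζ.2) _
    have hD : ‖(f ζ (z ζ) + g ζ (z ζ) (υ ζ) + h ζ) - (f ζ (x ζ) + g ζ (x ζ) (u ζ))‖
        ≤ lam * ‖z ζ - x ζ‖ + φ S := by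
      have b1 := hfLip ζ hζT (x ζ) (z ζ)
      have b2 := hgLip ζ hζT (x ζ) (z ζ) (u ζ) (υ ζ)
      have b3 := mul_le_mul_of_nonneg_left (huυ ζ hζT) hlg.le
      have b4 := (hh ζ hζT).trans (hφmono hζT hS (hζ.2.trans hs.2))
      rw [show (f ζ (z ζ) + g ζ (z ζ) (υ ζ) + h ζ) - (f ζ (x ζ) + g ζ (x ζ) (u ζ))
        = (f ζ (z ζ) - f ζ (x ζ)) + (g ζ (z ζ) (υ ζ) - g ζ (x ζ) (u ζ)) + h ζ by abel]
      refine norm_add₃_le.trans ?_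
      rw [hlam_eq]
      linarith
    rw [norm_smul, Real.norm_of_nonneg hk0]
    linarith [mul_le_mul_of_nonneg_left hD hk0]
  rw [intervalIntegral.integral_add (hkw.const_mul lam)
    ((intervalIntegrable_kernel hq0 s).const_mul (φ S)), intervalIntegral.integral_const_mul,
    intervalIntegral.integral_const_mul, hk1] at hbound
  have hΓ1 : 0 < Real.Gamma (q + 1) := Real.Gamma_pos_of_pos (by linarith)
  have hsq : s ^ q / Real.Gamma (q + 1) * φ S ≤ T ^ q / Real.Gamma (q + 1) * φ S := by
    have := hφ0 S hS
    have := Real.rpow_le_rpow hs.1 hsT.2 hq0.le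
    gcongr
  have hfin := mul_le_mul_of_nonneg_left hbound (inv_nonneg.2 hΓ.le)
  have e2 : (Real.Gamma q)⁻¹ * (lam * (∫ ζ in (0:ℝ)..s, (s - ζ) ^ (q - 1) * ‖z ζ - x ζ‖)
      + φ S * (s ^ q * (Real.Gamma q / Real.Gamma (q + 1))))
      = s ^ q / Real.Gamma (q + 1) * φ S
        + lam / Real.Gamma q * ∫ ζ in (0:ℝ)..s, (s - ζ) ^ (q - 1) * ‖z ζ - x ζ‖ := by
    field_simp
    ring
  rw [e2] at hfin
  rw [hdiff, norm_smul, Real.norm_of_nonneg (inv_nonneg.2 hΓ.le)]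
  linarith
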